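/- Let f be a self-usage utility function and let 0 ≤ p < q < f'(0). Let s₀, s ∈ [0,1) satisfy f'(1−s₀) = p and f'(1−s) = q, and set B* = q−p and t* = s − (f(1−s₀) − f(1−s) − p·(s−s₀))/(q−p). Then s is a global maximizer over [0,1] of the owner's utility under the linear loyalty program (B*, t*), namely of U(σ) = f(1−σ) + p·σ + B*·max(σ−t*, 0), and the resulting platform revenue equals (q−p)·s − B*·(s−t*) = B*·t*. -/

import Mathlib

/-- A self-usage utility function `f` with derivative `f'`:
differentiable on `[0,1]`, strictly increasing on `[0,1]`,
strictly concave on `[0,1]` (with `f'` strictly decreasing), and `f' 1 = 0`. -/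
def SelfUsage (f f' : ℝ → ℝ) : Prop :=
  (∀ x ∈ Set.Icc (0:ℝ) 1, HasDerivWithinAt f (f' x) (Set.Icc (0:ℝ) 1) x) ∧
  StrictMonoOn f (Set.Icc (0:ℝ) 1) ∧
  StrictConcaveOn ℝ (Set.Icc (0:ℝ) 1) f ∧
  StrictAntiOn f' (Set.Icc (0:ℝ) 1) ∧
  f' 1 = 0

/-!
A linear subsidy with bonus `q - p` makes the owner's utility the pointwise maximum of two
utilities at constant pay: the one at pay `p`, and the one at pay `q` less a fixed fee. These are
maximal at `s₀` and `s` respectively, and the threshold is chosen so that their maximal values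
agree; hence `s` maximizes the larger of the two.
-/

theorem isMaxOn_sup_of_le {α β : Type*} [SemilatticeSup β] {v w : α → β} {D : Set α} {a b : α}
    (hv : IsMaxOn v D a) (hw : IsMaxOn w D b) (h : v a ≤ w b) :
    IsMaxOn (v ⊔ w) D b :=
  fun _ hx => (sup_le ((hv hx).trans h) (hw hx)).trans le_sup_right

theorem concaveOn_le_tangent {f : ℝ → ℝ} {D : Set ℝ} {x y m : ℝ} (hf : ConcaveOn ℝ D f)
    (hx : x ∈ D) (hy : y ∈ D) (hfx : HasDerivWithinAt f m D x) :
    f y ≤ f x + m * (y - x) := by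
  rcases lt_trichotomy x y with hxy | rfl | hyx
  · have hslope := hf.slope_le_of_hasDerivWithinAt hx hy hxy hfx
    rw [slope_def_field, div_le_iff₀ (sub_pos.2 hxy)] at hslope
    linarith
  · simp
  · have hslope := hf.le_slope_of_hasDerivWithinAt hy hx hyx hfx
    rw [slope_def_field, le_div_iff₀ (sub_pos.2 hyx)] at hslope
    linarith

/-- The utility of an owner who shares `σ` units at the constant pay `r` per unit and keeps
`1 - σ` for self-usage. -/
def sharingUtility (f : ℝ → ℝ) (r σ : ℝ) : ℝ :=
  f (1 - σ) + r * σ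

/-- The subsidy `W(σ)` of the linear loyalty program with bonus `B` and threshold `t`. -/
def loyaltySubsidy (B t σ : ℝ) : ℝ :=
  B * max (σ - t) 0

/-- The owner's utility `U(σ)` at base pay `p` under the linear loyalty program `(B, t)`. -/
def loyaltyUtility (f : ℝ → ℝ) (p B t σ : ℝ) : ℝ :=
  sharingUtility f p σ + loyaltySubsidy B t σ

/-- The platform's revenue from an owner who shares `σ` under the linear loyalty program `(B, t)`,
at base pay `p` and renter price `q`. -/
def loyaltyRevenue (p q B t σ : ℝ) : ℝ :=
  (q - p) * σ - loyaltySubsidy B t σ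

/-- The threshold `t*` at which, with bonus `q - p`, the owner is indifferent between sharing `s₀`
without subsidy and sharing `s` with it. The quotient takes the junk value `0` when `p = q`. -/
noncomputable def indifferenceThreshold (f : ℝ → ℝ) (p q s₀ s : ℝ) : ℝ :=
  s - (f (1 - s₀) - f (1 - s) - p * (s - s₀)) / (q - p)

theorem isMaxOn_sharingUtility_of_concaveOn {f : ℝ → ℝ} {D : Set ℝ} {r s : ℝ} (hf : ConcaveOn ℝ D f)
    (hs : 1 - s ∈ D) (hfs : HasDerivWithinAt f r D (1 - s)) :
    IsMaxOn (sharingUtility f r) ((1 - ·) ⁻¹' D) s := by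
  refine isMaxOn_iff.2 fun σ hσ => ?_
  have htangent := concaveOn_le_tangent hf hs hσ hfs
  unfold sharingUtility
  linarith

theorem SelfUsage.isMaxOn_sharingUtility {f f' : ℝ → ℝ} (hf : SelfUsage f f') {s : ℝ}
    (hs : s ∈ Set.Icc (0 : ℝ) 1) :
    IsMaxOn (sharingUtility f (f' (1 - s))) (Set.Icc 0 1) s := by
  obtain ⟨hderiv, -, hconcave, -, -⟩ := hf
  have hs' := Set.Icc.one_sub_mem hs
  exact (isMaxOn_sharingUtility_of_concaveOn hconcave.concaveOn hs' (hderiv _ hs')).on_subset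
    fun _ => Set.Icc.one_sub_mem

theorem loyaltyUtility_eq_sup {p q : ℝ} (hpq : p ≤ q) (f : ℝ → ℝ) (t : ℝ) :
    loyaltyUtility f p (q - p) t =
      sharingUtility f p ⊔ fun σ => sharingUtility f q σ - (q - p) * t := by
  funext σ
  calc loyaltyUtility f p (q - p) t σ
    _ = sharingUtility f p σ + max ((q - p) * (σ - t)) 0 := by
      rw [loyaltyUtility, loyaltySubsidy, mul_max_of_nonneg _ _ (sub_nonneg.2 hpq), mul_zero]
    _ = max (sharingUtility f p σ) (sharingUtility f p σ + (q - p) * (σ - t)) := by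
      rw [← max_add_add_left, add_zero, max_comm]
    _ = max (sharingUtility f p σ) (sharingUtility f q σ - (q - p) * t) := by
      unfold sharingUtility
      ring_nf

theorem sub_mul_sub_indifferenceThreshold {p q : ℝ} (hpq : p ≠ q) (f : ℝ → ℝ) (s₀ s : ℝ) :
    (q - p) * (s - indifferenceThreshold f p q s₀ s) =
      sharingUtility f p s₀ - sharingUtility f p s := by
  rw [indifferenceThreshold, sub_sub_cancel, mul_div_cancel₀ _ (sub_ne_zero.2 hpq.symm)]
  unfold sharingUtility
  ring

theorem indifferenceThreshold_le {f : ℝ → ℝ} {p q s₀ s : ℝ} (hpq : p < q)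
    (h : sharingUtility f p s ≤ sharingUtility f p s₀) :
    indifferenceThreshold f p q s₀ s ≤ s := by
  rw [← sub_nonneg, ← mul_nonneg_iff_of_pos_left (sub_pos.2 hpq),
    sub_mul_sub_indifferenceThreshold hpq.ne]
  exact sub_nonneg.2 h

theorem sharingUtility_eq_at_indifferenceThreshold {p q : ℝ} (hpq : p ≠ q) (f : ℝ → ℝ)
    (s₀ s : ℝ) :
    sharingUtility f p s₀ =
      sharingUtility f q s - (q - p) * indifferenceThreshold f p q s₀ s := by
  have hsubsidy := sub_mul_sub_indifferenceThreshold hpq f s₀ s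
  unfold sharingUtility at hsubsidy ⊢
  linarith

theorem loyaltyRevenue_of_le {t σ : ℝ} (h : t ≤ σ) (p q : ℝ) :
    loyaltyRevenue p q (q - p) t σ = (q - p) * t := by
  rw [loyaltyRevenue, loyaltySubsidy, max_eq_left (sub_nonneg.2 h)]
  ring

theorem optimal_LLP_maximizer_and_revenue_general {f : ℝ → ℝ} {D : Set ℝ} {p q s₀ s : ℝ}
    (hpq : p < q) (hs : s ∈ D)
    (hmax₀ : IsMaxOn (sharingUtility f p) D s₀) (hmax : IsMaxOn (sharingUtility f q) D s) :
    indifferenceThreshold f p q s₀ s ≤ s ∧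
      IsMaxOn (loyaltyUtility f p (q - p) (indifferenceThreshold f p q s₀ s)) D s ∧
      loyaltyRevenue p q (q - p) (indifferenceThreshold f p q s₀ s) s =
        (q - p) * indifferenceThreshold f p q s₀ s := by
  have hle : indifferenceThreshold f p q s₀ s ≤ s := indifferenceThreshold_le hpq (hmax₀ hs)
  refine ⟨hle, ?_, loyaltyRevenue_of_le hle p q⟩
  rw [loyaltyUtility_eq_sup hpq.le]
  exact isMaxOn_sup_of_le hmax₀ (hmax.sub isMinOn_const)
    (sharingUtility_eq_at_indifferenceThreshold hpq.ne f s₀ s).le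

/-- under the optimal linear loyalty program (B*, t*), the sharing
level s with f'(1-s) = q is a global maximizer of the owner's utility, and the
resulting platform revenue equals B* · t*. -/
theorem optimal_LLP_maximizer_and_revenue
    (f f' : ℝ → ℝ) (hf : SelfUsage f f')
    (p q : ℝ) (hp : 0 ≤ p) (hpq : p < q) (hq : q < f' 0)
    (s₀ s : ℝ) (hs₀ : s₀ ∈ Set.Ico (0:ℝ) 1) (hs : s ∈ Set.Ico (0:ℝ) 1)
    (hds₀ : f' (1 - s₀) = p) (hds : f' (1 - s) = q)
    (B t : ℝ) (hB : B = q - p)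
    (ht : t = s - (f (1 - s₀) - f (1 - s) - p * (s - s₀)) / (q - p)) :
    (∀ σ ∈ Set.Icc (0:ℝ) 1,
      f (1 - σ) + p * σ + B * max (σ - t) 0
        ≤ f (1 - s) + p * s + B * max (s - t) 0) ∧
    (q - p) * s - B * (s - t) = B * t := by
  subst hds₀ hds hB ht
  have hs' := Set.Ico_subset_Icc_self hs
  obtain ⟨hle, hmax, hrevenue⟩ := optimal_LLP_maximizer_and_revenue_general hpq hs'
    (hf.isMaxOn_sharingUtility (Set.Ico_subset_Icc_self hs₀)) (hf.isMaxOn_sharingUtility hs')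
  exact ⟨fun _ hσ => hmax hσ, by
    rwa [loyaltyRevenue, loyaltySubsidy, max_eq_left (sub_nonneg.2 hle)] at hrevenue⟩
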